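/- Let x̄ ∈ ℝ, σ > 0 and t > 0, and let P_t : ℝ → ℝ be defined by P_t(x) = t·sgn(x) if |x| > t and P_t(x) = x if |x| ≤ t. Set a₁ = (t + x̄)/(√2·σ) and a₂ = (t − x̄)/(√2·σ). Then (1/(√(2π)·σ)) ∫_{−∞}^{∞} P_t(x) · exp(−(x − x̄)²/(2σ²)) dx = (1/2)·√(2/π)·σ·(exp(−a₁²) − exp(−a₂²)) + (x̄/2 + t/2)·erf(a₁) + (x̄/2 − t/2)·erf(a₂), where erf(z) = (2/√π) ∫₀^z exp(−t²) dt. -/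

import Mathlib

open MeasureTheory

/-- The error function `erf(z) = (2/√π) ∫₀^z exp(−t²) dt`. -/
noncomputable def erf (z : ℝ) : ℝ :=
  (2 / Real.sqrt Real.pi) * ∫ t in (0:ℝ)..z, Real.exp (-t ^ 2)

/-- The clipping function `P_t(x) = t·sgn(x)` if `|x| > t`, `P_t(x) = x` if `|x| ≤ t`. -/
noncomputable def clip (t x : ℝ) : ℝ := if |x| ≤ t then x else t * Real.sign x

/-!
Clipping is a difference of two folded lines, `P_t(x) = (|x + t| - |x - t|) / 2`, so its Gaussian
mean is half the difference of the mean distances to `-t` and to `t`. Standardizing the Gaussian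
reduces a mean distance to `∫ |u + a| exp(-u²) du`. An antiderivative of `(u + a) exp(-u²)` is
`F(u) = (√π a erf u - exp(-u²)) / 2`; its limits at `±∞` are opposite, so integrating on the two
sides of the sign change at `u = -a` leaves only `-2 F(-a)`.
-/

open Filter Topology

lemma clip_eq_half_abs_sub_abs {t : ℝ} (ht : 0 ≤ t) (x : ℝ) :
    clip t x = (|x + t| - |x - t|) / 2 := by
  rcases lt_or_ge x (-t) with hx | hx
  · rw [clip, if_neg fun h => by linarith [(abs_le.mp h).1], Real.sign_of_neg (by linarith),
      abs_of_neg (by linarith), abs_of_neg (by linarith)]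
    ring
  rcases le_or_gt x t with hx' | hx'
  · rw [clip, if_pos (abs_le.mpr ⟨hx, hx'⟩), abs_of_nonneg (by linarith),
      abs_of_nonpos (by linarith)]
    ring
  · rw [clip, if_neg fun h => by linarith [(abs_le.mp h).2], Real.sign_of_pos (by linarith),
      abs_of_pos (by linarith), abs_of_pos (by linarith)]
    ring

lemma erf_neg (z : ℝ) : erf (-z) = -erf z := by
  have hsymm := intervalIntegral.integral_comp_neg (a := 0) (b := z) fun u => Real.exp (-u ^ 2)
  simp only [neg_sq, neg_zero] at hsymm
  rw [erf, erf, intervalIntegral.integral_symm, ← hsymm, mul_neg]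

lemma hasDerivAt_erf (z : ℝ) :
    HasDerivAt erf (2 / Real.sqrt Real.pi * Real.exp (-z ^ 2)) z := by
  have hcont : Continuous fun u : ℝ => Real.exp (-u ^ 2) := by fun_prop
  exact (hcont.integral_hasStrictDerivAt 0 z).hasDerivAt.const_mul _

lemma tendsto_erf_atTop : Tendsto erf atTop (𝓝 1) := by
  have hint : Integrable fun u : ℝ => Real.exp (-u ^ 2) := by
    simpa using integrable_exp_neg_mul_sq one_pos
  have hIoi : ∫ u in Set.Ioi (0 : ℝ), Real.exp (-u ^ 2) = Real.sqrt Real.pi / 2 := by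
    simpa using integral_gaussian_Ioi 1
  have hlim := (intervalIntegral_tendsto_integral_Ioi 0 hint.integrableOn tendsto_id).const_mul
    (2 / Real.sqrt Real.pi)
  rwa [hIoi, div_mul_div_cancel₀ (by positivity), div_self two_ne_zero] at hlim

lemma tendsto_erf_atBot : Tendsto erf atBot (𝓝 (-1)) := by
  have hlim := (tendsto_erf_atTop.comp tendsto_neg_atBot_atTop).neg
  refine hlim.congr fun z => ?_
  rw [Function.comp_apply, erf_neg, neg_neg]

lemma integrable_sub_mul_exp_neg_mul_sub_sq {b : ℝ} (hb : 0 < b) (m c : ℝ) :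
    Integrable fun x : ℝ => (x - c) * Real.exp (-b * (x - m) ^ 2) := by
  have hcentered : Integrable fun y : ℝ => (y + (m - c)) * Real.exp (-b * y ^ 2) := by
    simp only [add_mul]
    exact (integrable_mul_exp_neg_mul_sq hb).add
      ((integrable_exp_neg_mul_sq hb).const_mul (m - c))
  simpa using hcentered.comp_sub_right m

lemma integrable_abs_sub_mul_gaussian (m c : ℝ) {σ : ℝ} (hσ : σ ≠ 0) :
    Integrable fun x : ℝ => |x - c| * Real.exp (-(x - m) ^ 2 / (2 * σ ^ 2)) := by
  have hb : 0 < 1 / (2 * σ ^ 2) := by positivity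
  refine (integrable_sub_mul_exp_neg_mul_sub_sq hb m c).abs.congr (.of_forall fun x => ?_)
  simp only [abs_mul, Real.abs_exp]
  ring_nf

/-- The antiderivative of the Gaussian-weighted affine function `u ↦ (u + a) exp(-u²)` whose
limits at `±∞` are opposite. -/
noncomputable def affineGaussianPrimitive (a u : ℝ) : ℝ :=
  (Real.sqrt Real.pi * a * erf u - Real.exp (-u ^ 2)) / 2

lemma hasDerivAt_affineGaussianPrimitive (a u : ℝ) :
    HasDerivAt (affineGaussianPrimitive a) ((u + a) * Real.exp (-u ^ 2)) u := by
  have hexp : HasDerivAt (fun v : ℝ => Real.exp (-v ^ 2)) (Real.exp (-u ^ 2) * -(2 * u)) u := by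
    simpa using (hasDerivAt_pow 2 u).fun_neg.exp
  refine (((hasDerivAt_erf u).const_mul (Real.sqrt Real.pi * a)).fun_sub hexp).div_const 2
    |>.congr_deriv ?_
  field_simp
  ring

lemma tendsto_affineGaussianPrimitive (a : ℝ) {l : Filter ℝ} {e : ℝ}
    (hl : Tendsto (fun u : ℝ => u ^ 2) l atTop) (he : Tendsto erf l (𝓝 e)) :
    Tendsto (affineGaussianPrimitive a) l (𝓝 (Real.sqrt Real.pi * a * e / 2)) := by
  have hexp := Real.tendsto_exp_neg_atTop_nhds_zero.comp hl
  have hlim := ((he.const_mul (Real.sqrt Real.pi * a)).sub hexp).div_const 2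
  rw [sub_zero] at hlim
  exact hlim

lemma tendsto_affineGaussianPrimitive_atTop (a : ℝ) :
    Tendsto (affineGaussianPrimitive a) atTop (𝓝 (Real.sqrt Real.pi * a / 2)) := by
  simpa using tendsto_affineGaussianPrimitive a (tendsto_pow_atTop two_ne_zero) tendsto_erf_atTop

lemma tendsto_affineGaussianPrimitive_atBot (a : ℝ) :
    Tendsto (affineGaussianPrimitive a) atBot (𝓝 (-(Real.sqrt Real.pi * a / 2))) := by
  have hsq : Tendsto (fun u : ℝ => u ^ 2) atBot atTop :=
    ((tendsto_pow_atTop two_ne_zero).comp tendsto_neg_atBot_atTop).congr neg_sq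
  simpa [neg_div] using tendsto_affineGaussianPrimitive a hsq tendsto_erf_atBot

lemma integral_abs_add_mul_exp_neg_sq (a : ℝ) :
    ∫ u : ℝ, |u + a| * Real.exp (-u ^ 2) =
      Real.sqrt Real.pi * a * erf a + Real.exp (-a ^ 2) := by
  have hint : Integrable fun u : ℝ => (u + a) * Real.exp (-u ^ 2) := by
    simpa using integrable_sub_mul_exp_neg_mul_sub_sq one_pos 0 (-a)
  have hint_abs : Integrable fun u : ℝ => |u + a| * Real.exp (-u ^ 2) := by
    simpa only [abs_mul, Real.abs_exp] using hint.abs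
  have hright : ∫ u in Set.Ioi (-a), |u + a| * Real.exp (-u ^ 2) =
      Real.sqrt Real.pi * a / 2 - affineGaussianPrimitive a (-a) := by
    rw [← integral_Ioi_of_hasDerivAt_of_tendsto'
      (fun u _ => hasDerivAt_affineGaussianPrimitive a u) hint.integrableOn
      (tendsto_affineGaussianPrimitive_atTop a)]
    refine setIntegral_congr_fun measurableSet_Ioi fun u (hu : -a < u) => ?_
    simp only [abs_of_pos (show 0 < u + a by linarith)]
  have hleft : ∫ u in Set.Iic (-a), |u + a| * Real.exp (-u ^ 2) =
      -(affineGaussianPrimitive a (-a) - -(Real.sqrt Real.pi * a / 2)) := by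
    rw [← integral_Iic_of_hasDerivAt_of_tendsto'
      (fun u _ => hasDerivAt_affineGaussianPrimitive a u) hint.integrableOn
      (tendsto_affineGaussianPrimitive_atBot a), ← integral_neg]
    refine setIntegral_congr_fun measurableSet_Iic fun u (hu : u ≤ -a) => ?_
    simp only [abs_of_nonpos (show u + a ≤ 0 by linarith), neg_mul]
  rw [← intervalIntegral.integral_Iic_add_Ioi hint_abs.integrableOn hint_abs.integrableOn,
    hleft, hright, affineGaussianPrimitive, erf_neg, neg_sq]
  ring

lemma integral_abs_sub_mul_exp_neg_div_sq (m c : ℝ) {s : ℝ} (hs : s ≠ 0) :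
    ∫ x : ℝ, |x - c| * Real.exp (-((x - m) / s) ^ 2) =
      s ^ 2 * (Real.sqrt Real.pi * ((m - c) / s) * erf ((m - c) / s) +
        Real.exp (-((m - c) / s) ^ 2)) := by
  set g : ℝ → ℝ := fun u => |u + (m - c) / s| * Real.exp (-u ^ 2)
  have hstandardize (x : ℝ) :
      |x - c| * Real.exp (-((x - m) / s) ^ 2) = |s| * g ((x - m) / s) := by
    have hx : x - c = s * ((x - m) / s + (m - c) / s) := by
      field_simp
      ring
    rw [hx, abs_mul, mul_assoc]
  calc ∫ x : ℝ, |x - c| * Real.exp (-((x - m) / s) ^ 2)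
      = |s| * ∫ x : ℝ, g ((x - m) / s) := by simp only [hstandardize, integral_const_mul]
    _ = |s| * ∫ x : ℝ, g (x / s) := by
      rw [integral_sub_right_eq_self (fun x => g (x / s)) m]
    _ = |s| * (|s| * ∫ u : ℝ, g u) := by rw [Measure.integral_comp_div, smul_eq_mul]
    _ = _ := by rw [← mul_assoc, abs_mul_abs_self, ← sq, integral_abs_add_mul_exp_neg_sq]

lemma gaussian_mean_abs_sub (m c : ℝ) {σ : ℝ} (hσ : σ ≠ 0) :
    (1 / (Real.sqrt (2 * Real.pi) * σ)) *
        ∫ x : ℝ, |x - c| * Real.exp (-(x - m) ^ 2 / (2 * σ ^ 2)) =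
      Real.sqrt (2 / Real.pi) * σ * Real.exp (-((m - c) / (Real.sqrt 2 * σ)) ^ 2) +
        (m - c) * erf ((m - c) / (Real.sqrt 2 * σ)) := by
  have hs : Real.sqrt 2 * σ ≠ 0 := by positivity
  have hs_sq : (Real.sqrt 2 * σ) ^ 2 = 2 * σ ^ 2 := by
    rw [mul_pow, Real.sq_sqrt zero_le_two]
  have hdensity (x : ℝ) : -(x - m) ^ 2 / (2 * σ ^ 2) = -((x - m) / (Real.sqrt 2 * σ)) ^ 2 := by
    rw [div_pow, hs_sq, neg_div]
  simp only [hdensity]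
  rw [integral_abs_sub_mul_exp_neg_div_sq m c hs, Real.sqrt_mul zero_le_two,
    Real.sqrt_div zero_le_two]
  field_simp
  ring

/-- the Gaussian mean of `P_t(x)`, with `a₁ = (t + x̄)/(√2σ)` and
`a₂ = (t − x̄)/(√2σ)`, equals
`½√(2/π)σ(e^{−a₁²} − e^{−a₂²}) + (x̄/2 + t/2)erf(a₁) + (x̄/2 − t/2)erf(a₂)`. -/
theorem gaussian_mean_clip (xbar σ t : ℝ) (hσ : 0 < σ) (ht : 0 < t)
    (a₁ a₂ : ℝ) (ha₁ : a₁ = (t + xbar) / (Real.sqrt 2 * σ))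
    (ha₂ : a₂ = (t - xbar) / (Real.sqrt 2 * σ)) :
    (1 / (Real.sqrt (2 * Real.pi) * σ)) *
        ∫ x : ℝ, clip t x * Real.exp (-(x - xbar) ^ 2 / (2 * σ ^ 2)) =
      (1 / 2) * Real.sqrt (2 / Real.pi) * σ *
          (Real.exp (-a₁ ^ 2) - Real.exp (-a₂ ^ 2)) +
        (xbar / 2 + t / 2) * erf a₁ + (xbar / 2 - t / 2) * erf a₂ := by
  have hint (c : ℝ) := integrable_abs_sub_mul_gaussian xbar c hσ.ne'
  have hclip : ∫ x : ℝ, clip t x * Real.exp (-(x - xbar) ^ 2 / (2 * σ ^ 2)) =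
      ((∫ x : ℝ, |x - -t| * Real.exp (-(x - xbar) ^ 2 / (2 * σ ^ 2))) -
        ∫ x : ℝ, |x - t| * Real.exp (-(x - xbar) ^ 2 / (2 * σ ^ 2))) / 2 := by
    rw [← integral_sub (hint (-t)) (hint t), ← integral_div]
    simp only [clip_eq_half_abs_sub_abs ht.le, sub_neg_eq_add, ← sub_mul, div_mul_eq_mul_div]
  have ha₁' : (xbar - -t) / (Real.sqrt 2 * σ) = a₁ := by rw [ha₁, sub_neg_eq_add, add_comm]
  have ha₂' : (xbar - t) / (Real.sqrt 2 * σ) = -a₂ := by rw [ha₂, ← neg_div, neg_sub]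
  rw [hclip, ← mul_div_assoc, mul_sub, gaussian_mean_abs_sub xbar (-t) hσ.ne',
    gaussian_mean_abs_sub xbar t hσ.ne', ha₁', ha₂', erf_neg, neg_sq]
  ring
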